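/- (Classical terminating transformation (bi) from the paper.) Let a, b, d, c_1,...,c_r be complex numbers and m_1,...,m_r nonnegative integers with |m| = ∑m_i, Re(d-a-b-|m|) > 0, and no denominators vanishing. Then ∑_{k=0}^∞ (a)_k (b)_k ∏_{i=1}^r (c_i+m_i)_k / (k! (d)_k ∏_{i=1}^r (c_i)_k) = (-1)^{|m|} [Γ(d)Γ(d-a-b-|m|)/(Γ(d-a)Γ(d-b))] ∏_{i=1}^r (1+c_i-d)_{m_i} × ∑_{x_1=0}^{m_1}⋯∑_{x_r=0}^{m_r} [ (Δ(c+x)/Δ(c)) ∏_{i=1}^r (c_i-a)_{x_i}(c_i-b)_{x_i}/((c_i)_{x_i}(1+c_i-d)_{x_i}) ∏_{i,k=1}^r (c_i-c_k-m_k)_{x_i}/(1+c_i-c_k)_{x_i} ], where Δ(c+x)/Δ(c) = ∏_{1≤i<j≤r} (c_i+x_i-c_j-x_j)/(c_i-c_j). -/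

import Mathlib

open Finset

/-- Pochhammer symbol (rising factorial) `(x)_k`. -/
noncomputable def poch (x : ℂ) (k : ℕ) : ℂ := ∏ j ∈ Finset.range k, (x + j)

open Filter Topology

lemma poch_zero (x : ℂ) : poch x 0 = 1 := by simp [poch]

lemma poch_succ (x : ℂ) (n : ℕ) : poch x (n + 1) = poch x n * (x + n) := by
  simp [poch, prod_range_succ]

lemma poch_succ_left (x : ℂ) (n : ℕ) : poch x (n + 1) = x * poch (x + 1) n := by
  simp only [poch, prod_range_succ']
  rw [mul_comm]
  congr 1
  · simp
  · exact prod_congr rfl fun j _ => by push_cast; ring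

lemma poch_add (x : ℂ) (m n : ℕ) : poch x (m + n) = poch x m * poch (x + m) n := by
  simp only [poch, prod_range_add]
  congr 1
  exact prod_congr rfl fun j _ => by push_cast; ring

lemma poch_ne_zero {x : ℂ} (hx : ∀ k : ℕ, x + k ≠ 0) (n : ℕ) : poch x n ≠ 0 :=
  prod_ne_zero_iff.2 fun j _ => hx j

lemma poch_reflect (x : ℂ) (n : ℕ) : poch x n = (-1) ^ n * poch (1 - x - n) n := by
  unfold poch
  rw [← prod_range_reflect, ← card_range n, ← prod_const, card_range, ← prod_mul_distrib]
  refine prod_congr rfl fun j hj => ?_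
  have : 1 + j ≤ n := by have := mem_range.1 hj; omega
  rw [Nat.sub_sub, Nat.cast_sub this]
  push_cast
  ring

/-- Euler's limit formula for `1 / Γ`, valid at the poles of `Γ` as well. -/
lemma tendsto_poch_div (a : ℂ) :
    Tendsto (fun n : ℕ => poch a (n + 1) / ((n : ℂ) ^ a * n.factorial)) atTop
      (𝓝 (Complex.Gamma a)⁻¹) := by
  by_cases h : Complex.Gamma a = 0
  · rw [h, inv_zero]
    obtain ⟨m, rfl⟩ := (Complex.Gamma_eq_zero_iff a).1 h
    refine tendsto_const_nhds.congr' ?_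
    filter_upwards [eventually_ge_atTop m] with n hn
    have : poch (-(m : ℂ)) (n + 1) = 0 :=
      prod_eq_zero (mem_range.2 (Nat.lt_succ_of_le hn)) (by simp)
    simp [this]
  · refine ((Complex.GammaSeq_tendsto_Gamma a).inv₀ h).congr fun n => ?_
    rw [Complex.GammaSeq, inv_div]
    rfl

/-- The general term of Gauss's series `₂F₁(a, b; d; 1)`. -/
noncomputable def gaussTerm (a b d : ℂ) (k : ℕ) : ℂ :=
  poch a k * poch b k / ((k.factorial : ℂ) * poch d k)

lemma gaussTerm_zero (a b d : ℂ) : gaussTerm a b d 0 = 1 := by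
  simp [gaussTerm, poch_zero]

lemma gaussTerm_succ {a b d : ℂ} (hd : ∀ k : ℕ, d + k ≠ 0) (k : ℕ) :
    (k + 1) * gaussTerm a b d (k + 1) = (a + k) * (b + k) / (d + k) * gaussTerm a b d k := by
  have h1 := poch_ne_zero hd k
  have h2 := hd k
  have h3 : (k.factorial : ℂ) ≠ 0 := by exact_mod_cast k.factorial_ne_zero
  have h4 : (k + 1 : ℂ) ≠ 0 := by exact_mod_cast k.succ_ne_zero
  simp only [gaussTerm, poch_succ, Nat.factorial_succ]
  push_cast
  field_simp

lemma gaussTerm_succ_left {a b d : ℂ} (hd : ∀ k : ℕ, d + k ≠ 0) (k : ℕ) :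
    (k + 1) * gaussTerm a b d (k + 1) = a * b / d * gaussTerm (a + 1) (b + 1) (d + 1) k := by
  have h2 : d ≠ 0 := by simpa using hd 0
  have h1 : poch (d + 1) k ≠ 0 :=
    poch_ne_zero (fun j => by have := hd (j + 1); push_cast at this; convert this using 1; ring) k
  have h3 : (k.factorial : ℂ) ≠ 0 := by exact_mod_cast k.factorial_ne_zero
  have h4 : (k + 1 : ℂ) ≠ 0 := by exact_mod_cast k.succ_ne_zero
  simp only [gaussTerm, poch_succ_left, Nat.factorial_succ]
  push_cast
  field_simp

lemma gaussTerm_add_one_right {a b d : ℂ} (hd : ∀ k : ℕ, d + k ≠ 0) (k : ℕ) :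
    (d + k) * gaussTerm a b (d + 1) k = d * gaussTerm a b d k := by
  have h2 : d ≠ 0 := by simpa using hd 0
  have h5 := hd k
  have h1 := poch_ne_zero hd k
  have h : d * poch (d + 1) k = poch d k * (d + k) := by rw [← poch_succ, poch_succ_left]
  have h6 : poch (d + 1) k ≠ 0 := fun h0 => mul_ne_zero h1 h5 (by rw [← h, h0, mul_zero])
  have h3 : (k.factorial : ℂ) ≠ 0 := by exact_mod_cast k.factorial_ne_zero
  simp only [gaussTerm]
  rw [← mul_div_assoc, ← mul_div_assoc, div_eq_div_iff (mul_ne_zero h3 h6) (mul_ne_zero h3 h1)]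
  linear_combination -(poch a k * poch b k * k.factorial) * h

lemma exists_gaussTerm_succ_asymp {a b d : ℂ} (hd : ∀ k : ℕ, d + k ≠ 0) :
    ∃ v : ℕ → ℂ, (∃ l, Tendsto v atTop (𝓝 l)) ∧
      ∀ n : ℕ, n ≠ 0 → (n + 1) * gaussTerm a b d (n + 1) = (n : ℂ) ^ (a + b - d) * v n := by
  have hG : Complex.Gamma d ≠ 0 :=
    Complex.Gamma_ne_zero fun m h => hd m (by rw [h]; ring)
  refine ⟨_, ⟨_, ((tendsto_poch_div a).mul (tendsto_poch_div b)).mul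
    ((tendsto_poch_div d).inv₀ (inv_ne_zero hG))⟩, fun n hn => ?_⟩
  have hn' : (n : ℂ) ≠ 0 := by exact_mod_cast hn
  have h1 := poch_ne_zero hd (n + 1)
  have h3 : (n.factorial : ℂ) ≠ 0 := by exact_mod_cast n.factorial_ne_zero
  have h4 : (n + 1 : ℂ) ≠ 0 := by exact_mod_cast n.succ_ne_zero
  have ha : (n : ℂ) ^ a ≠ 0 := by simp [Complex.cpow_eq_zero_iff, hn']
  have hb : (n : ℂ) ^ b ≠ 0 := by simp [Complex.cpow_eq_zero_iff, hn']
  have hdd : (n : ℂ) ^ d ≠ 0 := by simp [Complex.cpow_eq_zero_iff, hn']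
  rw [Complex.cpow_sub _ _ hn', Complex.cpow_add _ _ hn', gaussTerm, Nat.factorial_succ]
  push_cast
  field_simp

lemma summable_gaussTerm {a b d : ℂ} (hd : ∀ k : ℕ, d + k ≠ 0) (h : 0 < (d - a - b).re) :
    Summable (gaussTerm a b d) := by
  obtain ⟨v, ⟨l, hv⟩, hn⟩ := exists_gaussTerm_succ_asymp (a := a) (b := b) hd
  rw [← summable_nat_add_iff 1]
  have hs : Summable fun n : ℕ => (n : ℝ) ^ ((a + b - d).re - 1) :=
    Real.summable_nat_rpow.2 (by simp at h ⊢; linarith)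
  obtain ⟨C, hC⟩ := hv.norm.isBoundedUnder_le
  refine Summable.of_norm_bounded_eventually_nat (hs.mul_left C) ?_
  filter_upwards [eventually_map.1 hC, eventually_ge_atTop 1] with n h1 h2
  have hpos : (0 : ℝ) < n := by exact_mod_cast h2
  have h3 := congrArg norm (hn n (by omega))
  rw [norm_mul, norm_mul, Complex.norm_natCast_cpow_of_pos (by omega)] at h3
  have h4 : ‖(n + 1 : ℂ)‖ = n + 1 := by
    rw [← Nat.cast_succ, Complex.norm_natCast, Nat.cast_succ]
  rw [h4] at h3
  rw [Real.rpow_sub_one hpos.ne']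
  have h5 : (n : ℝ) * ‖gaussTerm a b d (n + 1)‖ ≤ (n : ℝ) ^ (a + b - d).re * C :=
    calc _ ≤ (n + 1 : ℝ) * ‖gaussTerm a b d (n + 1)‖ := by gcongr; linarith
      _ = _ := h3
      _ ≤ _ := by gcongr
  rw [← mul_div_assoc, le_div_iff₀ hpos]
  linarith

lemma tendsto_mul_gaussTerm {a b d : ℂ} (hd : ∀ k : ℕ, d + k ≠ 0) (h : 0 < (d - a - b).re) :
    Tendsto (fun n : ℕ => (n : ℂ) * gaussTerm a b d n) atTop (𝓝 0) := by
  obtain ⟨v, ⟨l, hv⟩, hn⟩ := exists_gaussTerm_succ_asymp (a := a) (b := b) hd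
  rw [← tendsto_add_atTop_iff_nat 1]
  have h0 : Tendsto (fun n : ℕ => (n : ℂ) ^ (a + b - d)) atTop (𝓝 0) := by
    rw [tendsto_zero_iff_norm_tendsto_zero]
    have := (tendsto_rpow_neg_atTop h).comp (tendsto_natCast_atTop_atTop (R := ℝ))
    refine this.congr' ?_
    filter_upwards [eventually_gt_atTop 0] with n hn
    rw [Complex.norm_natCast_cpow_of_pos hn]
    simp only [Function.comp]
    congr 1
    simp; ring
  have := h0.mul hv
  rw [zero_mul] at this
  refine this.congr' ?_
  filter_upwards [eventually_ne_atTop 0] with n h1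
  rw [← hn n h1]
  push_cast
  rfl

lemma tsum_gaussTerm_contiguous {a b d : ℂ} (hd : ∀ k : ℕ, d + k ≠ 0)
    (h : 0 < (d - a - b).re) :
    d * (d - a - b) * ∑' k, gaussTerm a b d k =
      (d - a) * (d - b) * ∑' k, gaussTerm a b (d + 1) k := by
  have hd' : ∀ k : ℕ, d + 1 + k ≠ 0 := fun j => by
    have := hd (j + 1); push_cast at this; convert this using 1; ring
  have s1 := (summable_gaussTerm hd h).hasSum.mul_left (d * (d - a - b))
  have s2 := (summable_gaussTerm (a := a) (b := b) hd' (by simp at h ⊢; linarith)).hasSum.mul_left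
    ((d - a) * (d - b))
  rw [← sub_eq_zero]
  refine tendsto_nhds_unique (s1.sub s2).tendsto_sum_nat ?_
  have h0 := (tendsto_mul_gaussTerm hd h).const_mul (-d)
  rw [mul_zero] at h0
  refine h0.congr fun n => ?_
  have : ∀ k : ℕ, d * (d - a - b) * gaussTerm a b d k - (d - a) * (d - b) * gaussTerm a b (d + 1) k
      = -d * ((k + 1 : ℕ) * gaussTerm a b d (k + 1)) - -d * (k * gaussTerm a b d k) := by
    intro k
    have e1 := gaussTerm_succ (a := a) (b := b) hd k
    have e2 := gaussTerm_add_one_right (a := a) (b := b) hd k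
    have h5 := hd k
    push_cast
    rw [e1]
    field_simp
    linear_combination -(d - a) * (d - b) * e2
  simp_rw [this]
  rw [sum_range_sub fun k : ℕ => -d * (k * gaussTerm a b d k)]
  simp

lemma tsum_gaussTerm_iterate {a b : ℂ} (n : ℕ) : ∀ {d : ℂ}, (∀ k : ℕ, d + k ≠ 0) →
    0 < (d - a - b).re →
    poch d n * poch (d - a - b) n * ∑' k, gaussTerm a b d k =
      poch (d - a) n * poch (d - b) n * ∑' k, gaussTerm a b (d + n) k := by
  induction n with
  | zero => intro d _ _; simp [poch_zero]
  | succ n ih =>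
    intro d hd h
    have hd' : ∀ k : ℕ, d + 1 + k ≠ 0 := fun j => by
      have := hd (j + 1); push_cast at this; convert this using 1; ring
    have e := ih hd' (by simp at h ⊢; linarith)
    have e1 := tsum_gaussTerm_contiguous hd h
    have r1 : d + 1 - a - b = d - a - b + 1 := by ring
    have r2 : d + 1 - a = d - a + 1 := by ring
    have r3 : d + 1 - b = d - b + 1 := by ring
    have r4 : d + 1 + n = d + (n + 1 : ℕ) := by push_cast; ring
    rw [r1, r2, r3, r4] at e
    simp only [poch_succ_left]
    linear_combination (d - a) * (d - b) * e + poch (d + 1) n * poch (d - a - b + 1) n * e1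

lemma norm_gaussTerm_add_le {a b d : ℂ} (hd : ∀ k : ℕ, d + k ≠ 0) {n : ℕ}
    (hn : 0 ≤ 2 * d.re + n) (k : ℕ) :
    ‖gaussTerm a b (d + n) k‖ ≤ ‖gaussTerm a b d k‖ := by
  simp only [gaussTerm, norm_div, norm_mul]
  have h1 : 0 < ‖poch d k‖ := norm_pos_iff.2 (poch_ne_zero hd k)
  have h3 : 0 < ‖(k.factorial : ℂ)‖ := norm_pos_iff.2 (by exact_mod_cast k.factorial_ne_zero)
  gcongr
  simp only [poch, norm_prod]
  refine prod_le_prod (fun _ _ => norm_nonneg _) fun j _ => ?_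
  rw [← sq_le_sq₀ (norm_nonneg _) (norm_nonneg _), ← Complex.normSq_eq_norm_sq,
    ← Complex.normSq_eq_norm_sq, Complex.normSq_apply, Complex.normSq_apply]
  simp
  nlinarith [mul_nonneg n.cast_nonneg (add_nonneg hn (mul_nonneg zero_le_two j.cast_nonneg))]

lemma tendsto_tsum_gaussTerm_add {a b d : ℂ} (hd : ∀ k : ℕ, d + k ≠ 0)
    (h : 0 < (d - a - b).re) :
    Tendsto (fun n : ℕ => ∑' k, gaussTerm a b (d + n) k) atTop (𝓝 1) := by
  have key : Tendsto (fun n : ℕ => ∑' k, gaussTerm a b (d + n) k) atTop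
      (𝓝 (∑' k, if k = 0 then (1 : ℂ) else 0)) := by
    refine tendsto_tsum_of_dominated_convergence (summable_gaussTerm hd h).norm ?_ ?_
    · intro k
      rcases k with _ | k
      · simp [gaussTerm_zero]
      · simp only [Nat.succ_ne_zero, if_false]
        have e : ∀ n : ℕ, gaussTerm a b (d + n) (k + 1) =
            poch a (k + 1) * poch b (k + 1) / (k + 1).factorial *
              ∏ j ∈ range (k + 1), (d + j + n)⁻¹ := by
          intro n
          rw [prod_inv_distrib, gaussTerm, poch, poch, poch, ← div_eq_mul_inv, div_div]
          congr 2
          exact prod_congr rfl fun j _ => by ring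
        simp_rw [e]
        have h0 : ∀ j : ℕ, Tendsto (fun n : ℕ => (d + j + n)⁻¹) atTop (𝓝 0) := fun j =>
          tendsto_inv₀_cobounded.comp
            ((tendsto_const_add_cobounded _).comp (tendsto_natCast_atTop_cobounded (α := ℂ)))
        have := (tendsto_finsetProd (range (k + 1)) fun j _ => h0 j).const_mul
          (poch a (k + 1) * poch b (k + 1) / (k + 1).factorial)
        simpa using this
    · obtain ⟨N, hN⟩ := exists_nat_ge (-(2 * d.re))
      filter_upwards [eventually_ge_atTop N] with n hn k
      refine norm_gaussTerm_add_le hd ?_ k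
      have : (N : ℝ) ≤ n := by exact_mod_cast hn
      linarith
  simpa using key

/-- Gauss's summation theorem. -/
lemma hasSum_gaussTerm {a b d : ℂ} (hd : ∀ k : ℕ, d + k ≠ 0) (h : 0 < (d - a - b).re) :
    HasSum (gaussTerm a b d) (Complex.Gamma d * Complex.Gamma (d - a - b) /
      (Complex.Gamma (d - a) * Complex.Gamma (d - b))) := by
  have hG : Complex.Gamma d ≠ 0 :=
    Complex.Gamma_ne_zero fun m h => hd m (by rw [h]; ring)
  have hG' := Complex.Gamma_ne_zero_of_re_pos h
  refine (summable_gaussTerm hd h).hasSum_iff.2 ?_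
  have h1 := ((tendsto_poch_div d).mul (tendsto_poch_div (d - a - b))).mul_const
    (∑' k, gaussTerm a b d k)
  have h2 := ((tendsto_poch_div (d - a)).mul (tendsto_poch_div (d - b))).mul
    ((tendsto_add_atTop_iff_nat 1).2 (tendsto_tsum_gaussTerm_add hd h))
  have h3 := tendsto_nhds_unique_of_eventuallyEq h1 h2 <| by
    filter_upwards [eventually_ne_atTop 0] with n hn
    have hn' : (n : ℂ) ≠ 0 := by exact_mod_cast hn
    have e := tsum_gaussTerm_iterate (n + 1) hd h
    have e2 : (n : ℂ) ^ d * (n : ℂ) ^ (d - a - b) = (n : ℂ) ^ (d - a) * (n : ℂ) ^ (d - b) := by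
      rw [← Complex.cpow_add _ _ hn', ← Complex.cpow_add _ _ hn']
      congr 1
      ring
    rw [div_mul_div_comm, div_mul_div_comm, div_mul_eq_mul_div, div_mul_eq_mul_div, e,
      mul_mul_mul_comm, e2, mul_mul_mul_comm ((n : ℂ) ^ (d - a))]
  rw [mul_one] at h3
  rw [div_eq_mul_inv, mul_inv, ← h3]
  field_simp
section SubsetSum

open Polynomial

variable {ι : Type*} [DecidableEq ι]

/-- The contribution of `S ⊆ I` to `gaussFactor`. -/
noncomputable def subsetWeight (a b d : ℂ) (y : ι → ℂ) (I S : Finset ι) : ℂ :=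
  (∏ j ∈ S, (y j - a) * (y j - b)) * (∏ j ∈ I \ S, y j * (d - 1 - y j)) *
    ∏ i ∈ S, ∏ j ∈ I \ S, (y i - y j - 1) / (y i - y j)

/-- The polynomial in the `y j`, `j ∈ I`, by which inserting the factors `y j + k` into the
general term multiplies Gauss's sum, see `hasSum_gaussTerm_mul_prod`. -/
noncomputable def gaussFactor (a b d : ℂ) (y : ι → ℂ) (I : Finset ι) : ℂ :=
  ∑ S ∈ I.powerset, subsetWeight a b d y I S

lemma subsetWeight_insert_left (a b d : ℂ) (y : ι → ℂ) {I S : Finset ι} {z : ι} (hz : z ∉ I)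
    (hS : S ⊆ I) :
    subsetWeight a b d y (insert z I) S = subsetWeight a b d y I S *
      (y z * (d - 1 - y z) * ∏ u ∈ S, (y u - y z - 1) / (y u - y z)) := by
  have h1 : insert z I \ S = insert z (I \ S) := insert_sdiff_of_notMem _ fun h => hz (hS h)
  have h2 : z ∉ I \ S := fun h => hz (sdiff_subset h)
  simp only [subsetWeight, h1, prod_insert h2, prod_mul_distrib]
  ring

lemma subsetWeight_insert_insert (a b d : ℂ) (y : ι → ℂ) {I S : Finset ι} {z : ι} (hz : z ∉ I)
    (hS : S ⊆ I) :
    subsetWeight a b d y (insert z I) (insert z S) = subsetWeight a b d y I S *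
      ((y z - a) * (y z - b) * ∏ v ∈ I \ S, (y z - y v - 1) / (y z - y v)) := by
  have h1 : insert z I \ insert z S = I \ S := by
    rw [insert_sdiff_insert, sdiff_insert_of_notMem hz]
  have h2 : z ∉ S := fun h => hz (hS h)
  simp only [subsetWeight, h1, prod_insert h2, prod_mul_distrib]
  ring

lemma gaussFactor_insert (a b d : ℂ) (y : ι → ℂ) {I : Finset ι} {z : ι} (hz : z ∉ I) :
    gaussFactor a b d y (insert z I) = ∑ S ∈ I.powerset, subsetWeight a b d y I S *
      ((y z - a) * (y z - b) * (∏ v ∈ I \ S, (y z - y v - 1) / (y z - y v)) +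
        y z * (d - 1 - y z) * ∏ u ∈ S, (y u - y z - 1) / (y u - y z)) := by
  rw [gaussFactor, sum_powerset_insert hz, ← sum_add_distrib]
  refine sum_congr rfl fun S hS => ?_
  rw [subsetWeight_insert_left _ _ _ _ hz (mem_powerset.1 hS),
    subsetWeight_insert_insert _ _ _ _ hz (mem_powerset.1 hS)]
  ring

lemma degree_sub_sub_lt {R : Type*} [CommRing R] {p q t : R[X]} {n : ℕ} (hp : p.Monic)
    (hpn : p.natDegree = n + 1) (hq : q.Monic) (hqn : q.natDegree = n + 1) (ht : t.Monic)
    (htn : t.natDegree = n) :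
    (p - q - C (p.nextCoeff - q.nextCoeff) * t).degree < n := by
  rw [degree_lt_iff_coeff_zero]
  intro m hm
  have hp0 := nextCoeff_of_natDegree_pos (p := p) (by omega)
  have hq0 := nextCoeff_of_natDegree_pos (p := q) (by omega)
  rw [hp0, hq0, coeff_sub, coeff_sub, coeff_C_mul, hpn, hqn]
  have hp1 : p.coeff (n + 1) = 1 := by rw [← hpn]; exact hp
  have hq1 : q.coeff (n + 1) = 1 := by rw [← hqn]; exact hq
  have ht1 : t.coeff n = 1 := by rw [← htn]; exact ht
  obtain rfl | h := hm.eq_or_lt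
  · simp [ht1]
  rw [coeff_eq_zero_of_natDegree_lt (p := t) (by omega)]
  obtain rfl | h' := (Nat.succ_le_of_lt h).eq_or_lt
  · simp [hp1, hq1]
  · rw [coeff_eq_zero_of_natDegree_lt (p := p) (by omega),
      coeff_eq_zero_of_natDegree_lt (p := q) (by omega)]
    simp

/-- The numerator, as a polynomial in `y z`, of the term with `z` in the chosen subset. -/
noncomputable def memPoly (a b : ℂ) (y : ι → ℂ) (I S : Finset ι) : ℂ[X] :=
  (X - C a) * (X - C b) * ((∏ v ∈ I \ S, (X - C (y v + 1))) * ∏ u ∈ S, (X - C (y u)))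

/-- The numerator, as a polynomial in `y z`, of the term with `z` outside the chosen subset, up to
sign. -/
noncomputable def notMemPoly (d : ℂ) (y : ι → ℂ) (I S : Finset ι) : ℂ[X] :=
  (X - C 0) * (X - C (d - 1)) * ((∏ v ∈ I \ S, (X - C (y v))) * ∏ u ∈ S, (X - C (y u - 1)))

lemma monic_quadratic_mul (e f : ℂ) (g h : ι → ℂ) {I S : Finset ι} (hS : S ⊆ I) :
    let p := (X - C e) * (X - C f) * ((∏ v ∈ I \ S, (X - C (g v))) * ∏ u ∈ S, (X - C (h u)))
    p.Monic ∧ p.natDegree = #I + 1 + 1 ∧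
      p.nextCoeff = -(e + f + ∑ v ∈ I \ S, g v + ∑ u ∈ S, h u) := by
  have m0 : ((X - C e) * (X - C f)).Monic := (monic_X_sub_C e).mul (monic_X_sub_C f)
  have m1 : (∏ v ∈ I \ S, (X - C (g v))).Monic :=
    monic_prod_of_monic _ _ fun _ _ => monic_X_sub_C _
  have m2 : (∏ u ∈ S, (X - C (h u))).Monic :=
    monic_prod_of_monic _ _ fun _ _ => monic_X_sub_C _
  refine ⟨m0.mul (m1.mul m2), ?_, ?_⟩
  · rw [m0.natDegree_mul (m1.mul m2), m1.natDegree_mul m2,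
      (monic_X_sub_C e).natDegree_mul (monic_X_sub_C f), natDegree_X_sub_C, natDegree_X_sub_C,
      natDegree_finsetProd_X_sub_C_eq_card, natDegree_finsetProd_X_sub_C_eq_card,
      card_sdiff_add_card_eq_card hS]
    ring
  · rw [m0.nextCoeff_mul (m1.mul m2), m1.nextCoeff_mul m2,
      (monic_X_sub_C e).nextCoeff_mul (monic_X_sub_C f), nextCoeff_X_sub_C, nextCoeff_X_sub_C,
      prod_X_sub_C_nextCoeff, prod_X_sub_C_nextCoeff]
    ring

lemma degree_memPoly_sub_notMemPoly_lt (a b d : ℂ) (y : ι → ℂ) {I S : Finset ι} (hS : S ⊆ I) :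
    (memPoly a b y I S - notMemPoly d y I S -
      C (d - a - b - #I - 1) * (X * ∏ i ∈ I, (X - C (y i)))).degree < ((#I + 1 : ℕ) : WithBot ℕ) := by
  obtain ⟨m1, n1, c1⟩ := monic_quadratic_mul a b (fun v => y v + 1) y hS
  obtain ⟨m2, n2, c2⟩ := monic_quadratic_mul 0 (d - 1) y (fun u => y u - 1) hS
  have m3 : (∏ i ∈ I, (X - C (y i))).Monic := monic_prod_of_monic _ _ fun _ _ => monic_X_sub_C _
  have n3 : (X * ∏ i ∈ I, (X - C (y i))).natDegree = #I + 1 := by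
    rw [monic_X.natDegree_mul m3, natDegree_X, natDegree_finsetProd_X_sub_C_eq_card, add_comm]
  have := degree_sub_sub_lt m1 n1 m2 n2 (monic_X.mul m3) n3
  rw [c1, c2] at this
  have hc : (#I : ℂ) = #(I \ S) + #S := by exact_mod_cast (card_sdiff_add_card_eq_card hS).symm
  have e : -(a + b + ∑ v ∈ I \ S, (y v + 1) + ∑ u ∈ S, y u) -
      -(0 + (d - 1) + ∑ v ∈ I \ S, y v + ∑ u ∈ S, (y u - 1)) = d - a - b - #I - 1 := by
    simp only [sum_add_distrib, sum_sub_distrib, sum_const, nsmul_eq_mul, mul_one, hc]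
    ring
  rwa [e] at this

lemma eval_memPoly (a b : ℂ) {y : ι → ℂ} {I S : Finset ι} (hS : S ⊆ I) {x : ℂ}
    (hx : ∀ i ∈ I, x ≠ y i) :
    (memPoly a b y I S).eval x = (x - a) * (x - b) *
      (∏ v ∈ I \ S, (x - y v - 1) / (x - y v)) * ∏ i ∈ I, (x - y i) := by
  have h1 : ∏ v ∈ I \ S, (x - y v) ≠ 0 :=
    prod_ne_zero_iff.2 fun v hv => sub_ne_zero.2 (hx v (sdiff_subset hv))
  rw [← prod_sdiff hS, prod_div_distrib]
  simp only [memPoly, eval_mul, eval_prod, eval_sub, eval_X, eval_C, ← sub_sub]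
  field_simp

lemma eval_notMemPoly (d : ℂ) {y : ι → ℂ} {I S : Finset ι} (hS : S ⊆ I) {x : ℂ}
    (hx : ∀ i ∈ I, x ≠ y i) :
    (notMemPoly d y I S).eval x = -(x * (d - 1 - x) *
      (∏ u ∈ S, (y u - x - 1) / (y u - x)) * ∏ i ∈ I, (x - y i)) := by
  have h1 : ∏ u ∈ S, (x - y u) ≠ 0 :=
    prod_ne_zero_iff.2 fun v hv => sub_ne_zero.2 (hx v (hS hv))
  have h2 : ∏ u ∈ S, (y u - x - 1) / (y u - x) = ∏ u ∈ S, (x - (y u - 1)) / (x - y u) :=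
    prod_congr rfl fun u _ => by rw [← neg_div_neg_eq]; congr 1 <;> ring
  rw [← prod_sdiff hS, h2, prod_div_distrib]
  simp only [notMemPoly, eval_mul, eval_prod, eval_sub, eval_X, eval_C]
  field_simp
  ring

lemma sum_eval_memPoly_sub_notMemPoly_eq_zero (a b d : ℂ) {y : ι → ℂ} {I : Finset ι}
    (hy : Set.InjOn y I) {t : ι} (ht : t ∈ I) :
    ∑ S ∈ I.powerset, subsetWeight a b d y I S *
      ((memPoly a b y I S).eval (y t) - (notMemPoly d y I S).eval (y t)) = 0 := by
  obtain ⟨J, htJ, rfl⟩ : ∃ J, t ∉ J ∧ insert t J = I := ⟨I.erase t, notMem_erase t I, insert_erase ht⟩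
  have hx : ∀ i ∈ J, y t ≠ y i := fun i hi h =>
    htJ (hy (mem_insert_self t J) (mem_insert_of_mem hi) h ▸ hi)
  rw [sum_powerset_insert htJ, ← sum_add_distrib]
  refine sum_eq_zero fun S hS => ?_
  have hS' := mem_powerset.1 hS
  have htS : t ∉ S := fun h => htJ (hS' h)
  have h1 : insert t J \ S = insert t (J \ S) := insert_sdiff_of_notMem _ htS
  have h2 : t ∉ J \ S := fun h => htJ (sdiff_subset h)
  have h3 : insert t J \ insert t S = J \ S := by
    rw [insert_sdiff_insert, sdiff_insert_of_notMem htJ]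
  have e1 : (memPoly a b y (insert t J) S).eval (y t) = -(memPoly a b y J S).eval (y t) := by
    simp only [memPoly, h1, prod_insert h2, eval_mul, eval_sub, eval_X, eval_C]
    ring
  have e2 : (notMemPoly d y (insert t J) S).eval (y t) = 0 := by
    simp only [notMemPoly, h1, prod_insert h2, eval_mul, eval_sub, eval_X, eval_C]
    ring
  have e3 : (memPoly a b y (insert t J) (insert t S)).eval (y t) = 0 := by
    simp only [memPoly, h3, prod_insert htS, eval_mul, eval_sub, eval_X, eval_C]
    ring
  have e4 : (notMemPoly d y (insert t J) (insert t S)).eval (y t) =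
      (notMemPoly d y J S).eval (y t) := by
    simp only [notMemPoly, h3, prod_insert htS, eval_mul, eval_sub, eval_X, eval_C]
    ring
  rw [e1, e2, e3, e4, eval_memPoly a b hS' hx, eval_notMemPoly d hS' hx,
    subsetWeight_insert_left _ _ _ _ htJ hS', subsetWeight_insert_insert _ _ _ _ htJ hS']
  ring

lemma subsetWeight_mul_memPoly_eval_zero (a b d : ℂ) {y : ι → ℂ} {I S : Finset ι} (hS : S ⊆ I)
    (hy : ∀ i ∈ I, y i ≠ 0) :
    subsetWeight a b d y I S * (memPoly a b y I S).eval 0 =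
      a * b * subsetWeight (a + 1) (b + 1) (d + 1) (fun i => y i + 1) I S *
        ∏ i ∈ I, (0 - y i) := by
  rw [eval_memPoly a b hS fun i hi => (hy i hi).symm]
  have h1 : ∏ v ∈ I \ S, (0 - y v - 1) / (0 - y v) =
      (∏ v ∈ I \ S, (y v + 1)) / ∏ v ∈ I \ S, y v := by
    rw [← prod_div_distrib]
    exact prod_congr rfl fun u _ => by rw [← neg_div_neg_eq]; congr 1 <;> ring
  have h2 : ∏ v ∈ I \ S, y v ≠ 0 := prod_ne_zero_iff.2 fun v hv => hy v (sdiff_subset hv)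
  simp only [subsetWeight, h1, prod_mul_distrib (s := I \ S), add_sub_add_right_eq_sub]
  have h3 : ∀ j, d + 1 - 1 - (y j + 1) = d - 1 - y j := fun j => by ring
  simp only [h3]
  field_simp
  ring

lemma gaussFactor_insert_eq (a b d : ℂ) {y : ι → ℂ} {I : Finset ι} {z : ι} (hz : z ∉ I)
    (hy : Set.InjOn y (insert z I : Finset ι)) (hy0 : ∀ i ∈ I, y i ≠ 0) :
    gaussFactor a b d y (insert z I) = y z * (d - a - b - #I - 1) * gaussFactor a b d y I +
      a * b * gaussFactor (a + 1) (b + 1) (d + 1) (fun i => y i + 1) I := by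
  have hyI : Set.InjOn y I := hy.mono (by simp)
  have hx : ∀ i ∈ I, y z ≠ y i := fun i hi h =>
    hz (hy (mem_insert_self z I) (mem_insert_of_mem hi) h ▸ hi)
  set α := d - a - b - #I - 1 with hα
  set β := a * b * gaussFactor (a + 1) (b + 1) (d + 1) (fun i => y i + 1) I with hβ
  set P : ℂ[X] := ∏ i ∈ I, (X - C (y i)) with hP
  set D : ℂ[X] := ∑ S ∈ I.powerset, C (subsetWeight a b d y I S) *
      (memPoly a b y I S - notMemPoly d y I S - C α * (X * P)) - C β * P with hD
  have evalD : ∀ x, D.eval x = ∑ S ∈ I.powerset, subsetWeight a b d y I S *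
      ((memPoly a b y I S).eval x - (notMemPoly d y I S).eval x) -
        (α * gaussFactor a b d y I * x + β) * ∏ i ∈ I, (x - y i) := by
    intro x
    have : ∀ S ∈ I.powerset, subsetWeight a b d y I S *
        ((memPoly a b y I S).eval x - (notMemPoly d y I S).eval x -
          α * (x * ∏ i ∈ I, (x - y i))) = subsetWeight a b d y I S *
        ((memPoly a b y I S).eval x - (notMemPoly d y I S).eval x) -
          subsetWeight a b d y I S * (α * (x * ∏ i ∈ I, (x - y i))) := fun S _ => by ring
    simp only [hD, hP, eval_sub, eval_finsetSum, eval_mul, eval_C, eval_X, eval_prod]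
    rw [sum_congr rfl this, sum_sub_distrib, ← sum_mul, ← gaussFactor]
    ring
  have degD : D.degree < (#I + 1 : ℕ) := by
    refine (degree_sub_le _ _).trans_lt (max_lt ?_ ?_)
    · refine (degree_sum_le _ _).trans_lt ((Finset.sup_lt_iff (WithBot.bot_lt_coe _)).2 ?_)
      intro S hS
      rw [← smul_eq_C_mul]
      exact (degree_smul_le _ _).trans_lt <| degree_memPoly_sub_notMemPoly_lt a b d y (mem_powerset.1 hS)
    · rw [← smul_eq_C_mul]
      refine (degree_smul_le _ _).trans_lt ?_
      rw [hP, degree_prod_of_monic _ _ fun i _ => monic_X_sub_C _]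
      simp only [degree_X_sub_C, sum_const, nsmul_eq_mul, mul_one]
      exact_mod_cast Nat.lt_succ_self _
  have hD0 : D = 0 := by
    refine eq_zero_of_degree_lt_of_eval_finset_eq_zero (insert 0 (I.image y)) ?_ ?_
    · rwa [card_insert_of_notMem, card_image_of_injOn hyI]
      simpa using hy0
    · intro x hx
      rw [evalD]
      rcases mem_insert.1 hx with rfl | hx
      · have : ∀ S, (notMemPoly d y I S).eval 0 = 0 := fun S => by simp [notMemPoly]
        simp only [this, sub_zero, mul_zero, zero_add]
        rw [sum_congr rfl fun S hS =>
          subsetWeight_mul_memPoly_eval_zero a b d (mem_powerset.1 hS) hy0, ← sum_mul, ← mul_sum]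
        simp [hβ, gaussFactor]
      · obtain ⟨t, ht, rfl⟩ := mem_image.1 hx
        rw [sum_eval_memPoly_sub_notMemPoly_eq_zero a b d hyI ht,
          prod_eq_zero ht (sub_self _)]
        simp
  have hprod : ∏ i ∈ I, (y z - y i) ≠ 0 := prod_ne_zero_iff.2 fun i hi => sub_ne_zero.2 (hx i hi)
  have key := evalD (y z)
  rw [hD0, eval_zero] at key
  rw [gaussFactor_insert a b d y hz]
  refine mul_right_cancel₀ hprod ?_
  have e : ∀ S ∈ I.powerset, subsetWeight a b d y I S *
      ((y z - a) * (y z - b) * (∏ v ∈ I \ S, (y z - y v - 1) / (y z - y v)) +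
        y z * (d - 1 - y z) * ∏ u ∈ S, (y u - y z - 1) / (y u - y z)) * ∏ i ∈ I, (y z - y i) =
      subsetWeight a b d y I S *
        ((memPoly a b y I S).eval (y z) - (notMemPoly d y I S).eval (y z)) := fun S hS => by
    rw [eval_memPoly a b (mem_powerset.1 hS) hx, eval_notMemPoly d (mem_powerset.1 hS) hx]
    ring
  rw [sum_mul, sum_congr rfl e]
  linear_combination -key

/-- Gauss's summation theorem with polynomial factors inserted. -/
lemma hasSum_gaussTerm_mul_prod (I : Finset ι) : ∀ {a b d : ℂ} {y : ι → ℂ},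
    (∀ k : ℕ, d + k ≠ 0) → 0 < (d - a - b - #I).re → Set.InjOn y I →
    (∀ i ∈ I, ∀ k : ℕ, y i + k ≠ 0) →
    HasSum (fun k : ℕ => gaussTerm a b d k * ∏ i ∈ I, (y i + k))
      (Complex.Gamma d * Complex.Gamma (d - a - b - #I) /
        (Complex.Gamma (d - a) * Complex.Gamma (d - b)) * gaussFactor a b d y I) := by
  induction I using Finset.induction_on with
  | empty =>
    intro a b d y hd h _ _
    have h' : 0 < (d - a - b).re := by simpa using h
    simpa [gaussFactor, subsetWeight] using hasSum_gaussTerm hd h'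
  | insert z I hz ih =>
    intro a b d y hd h hy hy0
    have hyI : Set.InjOn y I := hy.mono (by simp)
    have hy0I : ∀ i ∈ I, ∀ k : ℕ, y i + k ≠ 0 := fun i hi => hy0 i (mem_insert_of_mem hi)
    have hd' : ∀ k : ℕ, d + 1 + k ≠ 0 := fun j => by
      have := hd (j + 1); push_cast at this; convert this using 1; ring
    have hd0 : d ≠ 0 := by simpa using hd 0
    rw [card_insert_of_notMem hz] at h ⊢
    have hs : d + 1 - (a + 1) - (b + 1) - #I = d - a - b - (#I + 1 : ℕ) := by push_cast; ring
    have s1 := (ih (a := a) (b := b) hd (by simp at h ⊢; linarith) hyI hy0I).mul_left (y z)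
    have s2 := (ih (a := a + 1) (b := b + 1) (y := fun i => y i + 1) hd' (by rwa [hs])
      (fun i hi j hj e => hyI hi hj (add_right_cancel e)) (fun i hi k => by
        have := hy0I i hi (k + 1); push_cast at this; convert this using 1; ring)).mul_left
      (a * b / d)
    let f : ℕ → ℂ := fun k => k * (gaussTerm a b d k * ∏ i ∈ I, (y i + k))
    have hf : (fun k => f (k + 1)) = fun k : ℕ => a * b / d *
        (gaussTerm (a + 1) (b + 1) (d + 1) k * ∏ i ∈ I, (y i + 1 + k)) := by
      funext k
      have e := gaussTerm_succ_left (a := a) (b := b) hd k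
      have e' : ∏ i ∈ I, (y i + (k + 1 : ℕ)) = ∏ i ∈ I, (y i + 1 + k) :=
        prod_congr rfl fun i _ => by push_cast; ring
      simp only [f, e']
      push_cast
      linear_combination (∏ i ∈ I, (y i + 1 + k)) * e
    rw [← hf, hasSum_nat_add_iff 1] at s2
    have g0 : d - a - b - (#I + 1 : ℕ) ≠ 0 := fun h0 => by
      rw [h0, Complex.zero_re] at h
      exact lt_irrefl _ h
    have g1 := Complex.Gamma_add_one _ g0
    have g2 : d - a - b - (#I + 1 : ℕ) + 1 = d - a - b - #I := by push_cast; ring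
    rw [g2] at g1
    have e1 : (fun k : ℕ => gaussTerm a b d k * ∏ i ∈ insert z I, (y i + k)) =
        fun k : ℕ => y z * (gaussTerm a b d k * ∏ i ∈ I, (y i + k)) + f k := by
      funext k
      simp only [f, prod_insert hz]
      ring
    rw [e1]
    refine (congrArg (fun v => HasSum _ v) ?_).mpr (s1.add s2)
    rw [gaussFactor_insert_eq a b d hz hy fun i hi => by simpa using hy0I i hi 0, hs, g1,
      Complex.Gamma_add_one d hd0, add_sub_add_right_eq_sub, add_sub_add_right_eq_sub]
    simp only [f, sum_range_one, Nat.cast_zero, zero_mul, add_zero]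
    push_cast
    field_simp
    ring

end SubsetSum

section Chains

variable {α : Type*} [Fintype α]

/-- The sum over subsets is supported on the unions of initial segments of the chains
`c i, c i + 1, …, c i + m i - 1`. -/
lemma gaussFactor_chains [DecidableEq α] (a b d : ℂ) (c : α → ℂ) (m : α → ℕ) :
    gaussFactor a b d (fun p : Σ _ : α, ℕ => c p.1 + p.2) (univ.sigma fun i => range (m i)) =
      ∑ x ∈ Fintype.piFinset fun i => range (m i + 1),
        subsetWeight a b d (fun p : Σ _ : α, ℕ => c p.1 + p.2) (univ.sigma fun i => range (m i))
          (univ.sigma fun i => range (x i)) := by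
  have hinj : Function.Injective
      fun x : α → ℕ => (univ.sigma fun i => range (x i) : Finset (Σ _ : α, ℕ)) := by
    intro x x' h
    funext i
    have := congrArg (fun S : Finset (Σ _ : α, ℕ) => ∀ j, (⟨i, j⟩ : Σ _ : α, ℕ) ∈ S ↔ j < x i) h
    simp only [mem_sigma, mem_univ, true_and, mem_range, implies_true, iff_self, true_iff,
      eq_iff_iff] at this
    have h1 := this (x i)
    have h2 := this (x' i)
    omega
  rw [gaussFactor, ← sum_image (g := fun x : α → ℕ =>
    (univ.sigma fun i => range (x i) : Finset (Σ _ : α, ℕ))) hinj.injOn]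
  symm
  refine sum_subset ?_ ?_
  · intro S hS
    obtain ⟨x, hx, rfl⟩ := mem_image.1 hS
    rw [mem_powerset]
    refine sigma_mono Subset.rfl fun i => range_subset_range.2 ?_
    exact Nat.lt_succ_iff.1 (mem_range.1 (Fintype.mem_piFinset.1 hx i))
  · intro S hS hS'
    rw [mem_powerset] at hS
    obtain ⟨i, j, hj1, hj⟩ : ∃ i j, (⟨i, j + 1⟩ : Σ _ : α, ℕ) ∈ S ∧ (⟨i, j⟩ : Σ _ : α, ℕ) ∉ S := by
      by_contra! hdown
      refine hS' (mem_image.2 ?_)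
      have hm : ∀ i, (⟨i, m i⟩ : Σ _ : α, ℕ) ∉ S := fun i h => by simpa using hS h
      have hex : ∀ i, ∃ j, (⟨i, j⟩ : Σ _ : α, ℕ) ∉ S := fun i => ⟨m i, hm i⟩
      refine ⟨fun i => Nat.find (hex i), ?_, ?_⟩
      · exact Fintype.mem_piFinset.2 fun i =>
          mem_range.2 (Nat.lt_succ_of_le (Nat.find_min' _ (hm i)))
      · ext ⟨i, j⟩
        simp only [mem_sigma, mem_univ, true_and, mem_range]
        refine ⟨fun h => not_not.1 (Nat.find_min _ h), fun h => ?_⟩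
        by_contra! hle
        refine Nat.find_spec (hex i) ?_
        exact Nat.decreasingInduction' (P := fun j => (⟨i, j⟩ : Σ _ : α, ℕ) ∈ S)
          (fun k _ _ hk => hdown i k hk) hle h
    have hI : (⟨i, j⟩ : Σ _ : α, ℕ) ∈ univ.sigma fun i => range (m i) := by
      have := hS hj1
      simp only [mem_sigma, mem_univ, true_and, mem_range] at this ⊢
      omega
    rw [subsetWeight]
    refine mul_eq_zero_of_right _ (prod_eq_zero hj1 (prod_eq_zero (mem_sdiff.2 ⟨hI, hj⟩) ?_))
    simp

lemma prod_Ico_sub_div (t : ℂ) {p q : ℕ} (hpq : p ≤ q) (h : ∀ l : ℕ, p ≤ l → l ≤ q → t - l ≠ 0) :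
    ∏ l ∈ Ico p q, (t - l - 1) / (t - l) = (t - q) / (t - p) := by
  induction q, hpq using Nat.le_induction with
  | base => simp [div_self (h p le_rfl le_rfl)]
  | succ q hpq ih =>
    rw [prod_Ico_succ_top hpq, ih fun l h1 h2 => h l h1 (h2.trans q.le_succ)]
    have h1 := h p le_rfl (hpq.trans q.le_succ)
    have h2 := h q hpq q.le_succ
    push_cast
    field_simp
    ring

lemma prod_Ico_add (z : ℂ) {p q : ℕ} (hpq : p ≤ q) (hz : poch z p ≠ 0) :
    ∏ l ∈ Ico p q, (z + l) = poch z q / poch z p := by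
  rw [eq_div_iff hz, mul_comm]
  exact prod_range_mul_prod_Ico _ hpq

lemma subsetWeight_chains [DecidableEq α] {a b d : ℂ} {c : α → ℂ} {m x : α → ℕ}
    (hx : ∀ i, x i ≤ m i) (hc : ∀ i, poch (c i) (x i) ≠ 0)
    (hcd : ∀ i, poch (1 + c i - d) (x i) ≠ 0)
    (hsep : ∀ i k, i ≠ k → ∀ p q : ℕ, p ≤ m i → q ≤ m k → c i + p ≠ c k + q) :
    subsetWeight a b d (fun p : Σ _ : α, ℕ => c p.1 + p.2) (univ.sigma fun i => range (m i))
        (univ.sigma fun i => range (x i)) =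
      (∏ i, poch (c i - a) (x i) * poch (c i - b) (x i)) *
        (∏ i, poch (c i) (m i) / poch (c i) (x i) *
          ((-1) ^ (m i - x i) * (poch (1 + c i - d) (m i) / poch (1 + c i - d) (x i)))) *
        ∏ i, ∏ k, poch (c i - c k - m k) (x i) / poch (c i - c k - x k) (x i) := by
  have hI : (univ.sigma fun i => range (m i)) \ (univ.sigma fun i => range (x i)) =
      (univ.sigma fun i => Ico (x i) (m i) : Finset (Σ _ : α, ℕ)) := by
    ext ⟨i, j⟩
    simp only [Finset.mem_sdiff, Finset.mem_sigma, mem_univ, true_and, Finset.mem_range, mem_Ico]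
    omega
  rw [subsetWeight, hI, prod_sigma, prod_sigma, prod_sigma]
  congr 1
  · congr 1
    · refine prod_congr rfl fun i _ => ?_
      rw [prod_mul_distrib, poch, poch]
      congr 1 <;> exact prod_congr rfl fun j _ => by ring
    · refine prod_congr rfl fun i _ => ?_
      rw [prod_mul_distrib, prod_Ico_add _ (hx i) (hc i), ← prod_Ico_add _ (hx i) (hcd i),
        ← Nat.card_Ico, ← prod_const, ← prod_mul_distrib]
      congr 1
      exact prod_congr rfl fun j _ => by ring
  · refine prod_congr rfl fun i _ => ?_
    simp only [prod_sigma]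
    rw [Finset.prod_comm]
    refine prod_congr rfl fun k _ => ?_
    rw [poch, poch, ← prod_div_distrib]
    refine prod_congr rfl fun j hj => ?_
    have hj' := mem_range.1 hj
    have := prod_Ico_sub_div (c i - c k + j) (hx k) fun l h1 h2 h0 => by
      by_cases hik : i = k
      · subst hik
        have : (j : ℂ) = l := by linear_combination h0
        have : j = l := by exact_mod_cast this
        omega
      · refine hsep i k hik j l (hj'.le.trans (hx i)) h2 ?_
        linear_combination h0
    convert this using 1
    · exact prod_congr rfl fun l _ => by congr 1 <;> ring
    · congr 1 <;> ring

lemma poch_sub_mul_poch_sub (u : ℂ) (p q : ℕ) :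
    poch (u - q) p * poch (-u - p) q * (u + p - q) = u * (poch (1 + u) p * poch (1 - u) q) := by
  have h1 : poch (u - q) (p + (q + 1)) = poch (u - q) (q + (p + 1)) := by congr 1; omega
  rw [poch_add _ p (q + 1), poch_add _ q (p + 1), poch_succ_left _ q, poch_succ_left _ p] at h1
  have h2 := poch_reflect (-u - p) q
  have h3 := poch_reflect (1 - u) q
  rw [show 1 - (-u - p) - q = u - q + p + 1 by ring] at h2
  rw [show 1 - (1 - u) - q = u - q by ring] at h3
  rw [show u - q + q = u by ring, add_comm u 1] at h1
  rw [h2, h3]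
  linear_combination (-1) ^ q * h1

lemma prod_prod_eq_diag_mul [LinearOrder α] [LocallyFiniteOrderTop α] [LocallyFiniteOrderBot α]
    (F : α → α → ℂ) :
    ∏ i, ∏ k, F i k = (∏ i, F i i) * ∏ i, ∏ j ∈ Ioi i, F j i * F i j := by
  classical
  rw [prod_prod_Ioi_mul_eq_prod_prod_off_diag, Finset.prod_comm, ← prod_mul_distrib]
  refine prod_congr rfl fun i _ => ?_
  rw [← Fintype.prod_eq_mul_prod_compl i fun k => F k i]

lemma prod_prod_poch_sub [LinearOrder α] [LocallyFiniteOrderTop α] [LocallyFiniteOrderBot α]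
    {c : α → ℂ} (hcc : ∀ i j, i ≠ j → c i ≠ c j) (x : α → ℕ) :
    (∏ i, ∏ k, poch (c i - c k - x k) (x i)) *
        (∏ i, ∏ j ∈ Ioi i, (c i + x i - c j - x j) / (c i - c j)) =
      (-1) ^ (∑ i, x i) * ∏ i, ∏ k, poch (1 + c i - c k) (x i) := by
  have hdiag : ∏ i, poch (c i - c i - x i) (x i) =
      (-1) ^ (∑ i, x i) * ∏ i, poch (1 + c i - c i) (x i) := by
    rw [← prod_pow_eq_pow_sum, ← prod_mul_distrib]
    refine Finset.prod_congr rfl fun i _ => ?_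
    rw [poch_reflect (1 + c i - c i), ← mul_assoc, ← mul_pow]
    simp
  have hoff : (∏ i, ∏ j ∈ Ioi i, poch (c j - c i - x i) (x j) * poch (c i - c j - x j) (x i)) *
        (∏ i, ∏ j ∈ Ioi i, (c i + x i - c j - x j) / (c i - c j)) =
      ∏ i, ∏ j ∈ Ioi i, poch (1 + c j - c i) (x j) * poch (1 + c i - c j) (x i) := by
    rw [← prod_mul_distrib]
    refine Finset.prod_congr rfl fun i _ => ?_
    rw [← prod_mul_distrib]
    refine Finset.prod_congr rfl fun j hj => ?_
    have h0 : c i - c j ≠ 0 := sub_ne_zero.2 (hcc i j (mem_Ioi.1 hj).ne)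
    have h := poch_sub_mul_poch_sub (c i - c j) (x i) (x j)
    rw [mul_div_assoc', div_eq_iff h0]
    rw [show -(c i - c j) - x i = c j - c i - x i by ring,
      show 1 + (c i - c j) = 1 + c i - c j by ring,
      show 1 - (c i - c j) = 1 + c j - c i by ring] at h
    linear_combination h
  rw [prod_prod_eq_diag_mul, prod_prod_eq_diag_mul, mul_assoc, hoff, hdiag, mul_assoc]

end Chains

lemma poch_ne_zero_of_le {z : ℂ} {p q : ℕ} (hpq : p ≤ q) (h : poch z q ≠ 0) : poch z p ≠ 0 := by
  rw [← Nat.add_sub_cancel' hpq, poch_add] at h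
  exact left_ne_zero_of_mul h

lemma add_ne_add_of_poch_ne_zero {u v : ℂ} {m n : ℕ} (huv : u ≠ v) (hm : poch (1 + u - v) m ≠ 0)
    (hn : poch (1 + v - u) n ≠ 0) {p q : ℕ} (hp : p ≤ m) (hq : q ≤ n) : u + p ≠ v + q := by
  have aux : ∀ {u v : ℂ} {n p q : ℕ}, poch (1 + v - u) n ≠ 0 → p < q → q ≤ n →
      u + p ≠ v + q := by
    intro u v n p q hn hpq hq h
    refine prod_ne_zero_iff.1 hn (q - p - 1) (mem_range.2 (by omega)) ?_
    rw [Nat.sub_sub, Nat.cast_sub (by omega)]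
    push_cast
    linear_combination -h
  rcases lt_trichotomy p q with h | rfl | h
  · exact aux hn h hq
  · exact fun h => huv (add_right_cancel h)
  · exact (aux hm h hp).symm

theorem stmt18 (r : ℕ) (a b d : ℂ) (c : Fin r → ℂ) (m : Fin r → ℕ)
    (hconv : 0 < (d - a - b - (∑ i, m i : ℕ)).re)
    (hd : ∀ k : ℕ, d + k ≠ 0)
    (hc : ∀ i, ∀ k : ℕ, c i + k ≠ 0)
    (hcc : ∀ i j : Fin r, i ≠ j → c i ≠ c j)
    (hda : ∀ k : ℕ, d - a + k ≠ 0) (hdb : ∀ k : ℕ, d - b + k ≠ 0)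
    (hcd : ∀ i, poch (1 + c i - d) (m i) ≠ 0)
    (hcck : ∀ i k : Fin r, poch (1 + c i - c k) (m i) ≠ 0) :
    (∑' k : ℕ, poch a k * poch b k * (∏ i, poch (c i + m i) k) /
        ((k.factorial : ℂ) * poch d k * ∏ i, poch (c i) k)) =
      (-1) ^ (∑ i, m i) *
        (Complex.Gamma d * Complex.Gamma (d - a - b - (∑ i, m i : ℕ)) /
          (Complex.Gamma (d - a) * Complex.Gamma (d - b))) *
        (∏ i, poch (1 + c i - d) (m i)) *
        ∑ x ∈ Fintype.piFinset (fun i => Finset.range (m i + 1)),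
          (∏ i : Fin r, ∏ j ∈ Finset.univ.filter (fun j => i < j),
              (c i + x i - c j - x j) / (c i - c j)) *
            (∏ i : Fin r, poch (c i - a) (x i) * poch (c i - b) (x i) /
              (poch (c i) (x i) * poch (1 + c i - d) (x i))) *
            ∏ i : Fin r, ∏ k : Fin r,
              poch (c i - c k - m k) (x i) / poch (1 + c i - c k) (x i) := by
  have hsep : ∀ i k, i ≠ k → ∀ p q : ℕ, p ≤ m i → q ≤ m k → c i + p ≠ c k + q :=
    fun i k hik p q hp hq =>
      add_ne_add_of_poch_ne_zero (hcc i k hik) (hcck i k) (hcck k i) hp hq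
  set I : Finset (Σ _ : Fin r, ℕ) := univ.sigma fun i => range (m i) with hI
  have hcard : #I = ∑ i, m i := by simp [hI]
  have hmem : ∀ p ∈ I, p.2 < m p.1 := fun p hp => by simpa [hI] using hp
  have hinj : Set.InjOn (fun p : Σ _ : Fin r, ℕ => c p.1 + p.2) I := by
    rintro ⟨i, j⟩ hj ⟨k, l⟩ hl h
    by_cases hik : i = k
    · subst hik
      have : j = l := by exact_mod_cast add_left_cancel h
      rw [this]
    · exact absurd h (hsep i k hik j l (hmem _ hj).le (hmem _ hl).le)
  have hP : ∏ i, poch (c i) (m i) ≠ 0 := prod_ne_zero_iff.2 fun i _ => poch_ne_zero (hc i) _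
  have hsum := (hasSum_gaussTerm_mul_prod I (a := a) (b := b) hd (by rwa [hcard]) hinj
    (fun p _ k => by
      have := hc p.1 (p.2 + k); push_cast at this; convert this using 1; ring)).div_const
    (∏ i, poch (c i) (m i))
  rw [hcard] at hsum
  have hterm : ∀ k : ℕ, poch a k * poch b k * (∏ i, poch (c i + m i) k) /
      ((k.factorial : ℂ) * poch d k * ∏ i, poch (c i) k) =
      gaussTerm a b d k * (∏ p ∈ I, (c p.1 + p.2 + k)) / ∏ i, poch (c i) (m i) := by
    intro k
    have h1 : ∏ p ∈ I, (c p.1 + p.2 + k) = ∏ i, poch (c i + k) (m i) := by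
      rw [hI, prod_sigma]
      exact prod_congr rfl fun i _ => prod_congr rfl fun j _ => by ring
    have h2 : (∏ i, poch (c i) (m i)) * ∏ i, poch (c i + m i) k =
        (∏ i, poch (c i) k) * ∏ i, poch (c i + k) (m i) := by
      rw [← prod_mul_distrib, ← prod_mul_distrib]
      exact prod_congr rfl fun i _ => by rw [← poch_add, ← poch_add, add_comm]
    have h3 : ∏ i, poch (c i) k ≠ 0 := prod_ne_zero_iff.2 fun i _ => poch_ne_zero (hc i) _
    have h4 : (k.factorial : ℂ) * poch d k ≠ 0 :=
      mul_ne_zero (by exact_mod_cast k.factorial_ne_zero) (poch_ne_zero hd k)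
    rw [h1, gaussTerm, div_mul_eq_mul_div, div_div,
      div_eq_div_iff (mul_ne_zero h4 h3) (mul_ne_zero h4 hP)]
    linear_combination poch a k * poch b k * k.factorial * poch d k * h2
  have hweight : ∀ x ∈ Fintype.piFinset (fun i => range (m i + 1)),
      subsetWeight a b d (fun p : Σ _ : Fin r, ℕ => c p.1 + p.2) I
          (univ.sigma fun i => range (x i)) / ∏ i, poch (c i) (m i) =
        (-1) ^ (∑ i, m i) * (∏ i, poch (1 + c i - d) (m i)) *
          ((∏ i : Fin r, ∏ j ∈ univ.filter (fun j => i < j),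
              (c i + x i - c j - x j) / (c i - c j)) *
            (∏ i : Fin r, poch (c i - a) (x i) * poch (c i - b) (x i) /
              (poch (c i) (x i) * poch (1 + c i - d) (x i))) *
            ∏ i : Fin r, ∏ k : Fin r,
              poch (c i - c k - m k) (x i) / poch (1 + c i - c k) (x i)) := by
    intro x hx
    have hxm : ∀ i, x i ≤ m i := fun i =>
      Nat.lt_succ_iff.1 (mem_range.1 (Fintype.mem_piFinset.1 hx i))
    have hcx : ∀ i, poch (c i) (x i) ≠ 0 := fun i => poch_ne_zero (hc i) _
    have hcdx : ∀ i, poch (1 + c i - d) (x i) ≠ 0 := fun i => poch_ne_zero_of_le (hxm i) (hcd i)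
    have hsign : ∏ i, (-1 : ℂ) ^ (m i - x i) = (-1) ^ (∑ i, m i) * (-1) ^ (∑ i, x i) := by
      rw [← prod_pow_eq_pow_sum, ← prod_pow_eq_pow_sum, ← prod_mul_distrib]
      refine prod_congr rfl fun i _ => ?_
      rw [← pow_add, show m i + x i = m i - x i + 2 * x i by have := hxm i; omega, pow_add]
      simp [pow_mul]
    have hΔ := prod_prod_poch_sub hcc x
    have hg : ∏ i, ∏ k, poch (1 + c i - c k) (x i) ≠ 0 :=
      prod_ne_zero_iff.2 fun i _ => prod_ne_zero_iff.2 fun k _ =>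
        poch_ne_zero_of_le (hxm i) (hcck i k)
    have hf : ∏ i, ∏ k, poch (c i - c k - x k) (x i) ≠ 0 := fun h0 => by
      rw [h0, zero_mul] at hΔ
      exact mul_ne_zero (pow_ne_zero _ (neg_ne_zero.2 one_ne_zero)) hg hΔ.symm
    have hcx' : ∏ i, poch (c i) (x i) ≠ 0 := prod_ne_zero_iff.2 fun i _ => hcx i
    have hcdx' : ∏ i, poch (1 + c i - d) (x i) ≠ 0 := prod_ne_zero_iff.2 fun i _ => hcdx i
    rw [subsetWeight_chains hxm hcx hcdx hsep]
    simp only [filter_lt_eq_Ioi]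
    generalize (∏ i, ∏ j ∈ Ioi i, (c i + x i - c j - x j) / (c i - c j)) = Δ at hΔ ⊢
    simp only [prod_div_distrib, prod_mul_distrib, hsign]
    field_simp
    linear_combination -(∏ i, poch (c i - a) (x i)) * (∏ i, poch (c i - b) (x i)) *
      (∏ i, poch (1 + c i - d) (m i)) * (∏ i, ∏ k, poch (c i - c k - m k) (x i)) * hΔ
  rw [tsum_congr hterm, hsum.tsum_eq, gaussFactor_chains, mul_div_assoc, sum_div,
    sum_congr rfl hweight, ← mul_sum]
  ring
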